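/- Let J be a Jordan algebra over a field K of characteristic zero and let π : J → End(V) be a representation of J on a finite-dimensional vector space V. Then the bilinear form B_π : J × J → K defined by B_π(x, y) = tr(π(xy)) is symmetric and associative, i.e., B_π(xy, z) = B_π(x, yz) for all x, y, z ∈ J. -/

import Mathlib

/-- The linearization in `x` of the second identity of a Jordan representation, after taking
traces. -/
theorem trace_rep_mul_mul
    {K : Type*} [Field K] [CharZero K]
    {J : Type*} [NonUnitalNonAssocCommRing J] [Module K J]
    {V : Type*} [AddCommGroup V] [Module K V]
    (π : J →ₗ[K] Module.End K V)
    (hrep2 : ∀ x y : J,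
      2 • (π (x * y) * π x) + π (x * x) * π y - 2 • (π x * (π y * π x)) -
          π ((x * x) * y) = 0) (x y z : J) :
    LinearMap.trace K V (π ((x * y) * z)) =
      LinearMap.trace K V (π (x * z) * π y) + LinearMap.trace K V (π (y * z) * π x) +
        LinearMap.trace K V (π (x * y) * π z) - LinearMap.trace K V (π x * (π z * π y)) -
        LinearMap.trace K V (π y * (π z * π x)) := by
  have hx := congrArg (LinearMap.trace K V) (hrep2 x z)
  have hy := congrArg (LinearMap.trace K V) (hrep2 y z)
  have hxy := congrArg (LinearMap.trace K V) (hrep2 (x + y) z)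
  simp only [add_mul, mul_add, map_add, map_sub, map_nsmul, map_zero, mul_comm y x]
    at hx hy hxy
  simp only [nsmul_eq_mul, Nat.cast_ofNat] at hx hy hxy
  linear_combination (hx + hy - hxy) / 2

/-- for a representation `π` of a Jordan algebra `J` on a finite-dimensional
vector space `V`, the trace form `B_π(x, y) = tr(π(xy))` is symmetric and associative. -/
theorem trace_form_symmetric_and_associative
    {K : Type*} [Field K] [CharZero K]
    {J : Type*} [NonUnitalNonAssocCommRing J] [Module K J]
    [SMulCommClass K J J] [IsScalarTower K J J] [FiniteDimensional K J]
    {V : Type*} [AddCommGroup V] [Module K V] [FiniteDimensional K V]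
    (hjordan : ∀ x y : J, (x * y) * (x * x) = x * (y * (x * x)))
    (π : J →ₗ[K] Module.End K V)
    (hrep1 : ∀ x : J, π (x * x) * π x = π x * π (x * x))
    (hrep2 : ∀ x y : J,
      2 • (π (x * y) * π x) + π (x * x) * π y - 2 • (π x * (π y * π x)) -
          π ((x * x) * y) = 0) :
    (∀ x y : J,
      LinearMap.trace K V (π (x * y)) = LinearMap.trace K V (π (y * x))) ∧
    (∀ x y z : J,
      LinearMap.trace K V (π ((x * y) * z)) = LinearMap.trace K V (π (x * (y * z)))) := by
  refine ⟨fun x y => by rw [mul_comm], fun x y z => ?_⟩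
  rw [mul_comm x (y * z), trace_rep_mul_mul π hrep2 x y z, trace_rep_mul_mul π hrep2 y z x,
    mul_comm y x, mul_comm z x, LinearMap.trace_mul_cycle' K (π x) (π z) (π y),
    LinearMap.trace_mul_cycle' K (π y) (π z) (π x),
    LinearMap.trace_mul_cycle' K (π x) (π y) (π z)]
  ring
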